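/- Let W be a normal WPO-dilator and let X be a well partial order. If (Z, ι, κ) is an initial Kruskal fixed point of W over X, then Z is a well partial order. -/

import Mathlib

universe u

/-- A bundled partial order. -/
structure POrd : Type (u + 1) where
  carrier : Type u
  [str : PartialOrder carrier]

instance : CoeSort POrd.{u} (Type u) := ⟨POrd.carrier⟩
attribute [instance] POrd.str

def POrd.of (X : Type u) [PartialOrder X] : POrd.{u} := ⟨X⟩

/-- A quasi embedding of partial orders. -/
def QuasiEmb {X Y : Type*} [PartialOrder X] [PartialOrder Y] (f : X → Y) : Prop :=
  ∀ x y : X, f x ≤ f y → x ≤ y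

/-- An embedding of partial orders. -/
def IsEmb {X Y : Type*} [PartialOrder X] [PartialOrder Y] (f : X → Y) : Prop :=
  ∀ x y : X, x ≤ y ↔ f x ≤ f y

theorem quasiEmb_id {X : Type*} [PartialOrder X] : QuasiEmb (id : X → X) :=
  fun _ _ h => h

theorem QuasiEmb.comp {X Y Z : Type*} [PartialOrder X] [PartialOrder Y] [PartialOrder Z]
    {f : X → Y} {g : Y → Z} (hf : QuasiEmb f) (hg : QuasiEmb g) :
    QuasiEmb (g ∘ f) := fun x y h => hf x y (hg _ _ h)

/-- `LeFin a b` is the relation `a ≤ᶠⁱⁿ b` on subsets of a partial order. -/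
def LeFin {X : Type*} [PartialOrder X] (a b : Set X) : Prop :=
  ∀ x ∈ a, ∃ y ∈ b, x ≤ y

/-- A PO-dilator: an embedding-preserving functor on partial orders with quasi embeddings,
together with a natural finite support. -/
structure PODilator : Type (u + 1) where
  obj : POrd.{u} → POrd.{u}
  map : {X Y : POrd.{u}} → (f : X → Y) → QuasiEmb f → (obj X → obj Y)
  supp : {X : POrd.{u}} → obj X → Set X
  map_quasiEmb : ∀ {X Y : POrd.{u}} (f : X → Y) (hf : QuasiEmb f), QuasiEmb (map f hf)
  map_id : ∀ (X : POrd.{u}), map (id : X → X) quasiEmb_id = id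
  map_comp : ∀ {X Y Z : POrd.{u}} (f : X → Y) (g : Y → Z) (hf : QuasiEmb f) (hg : QuasiEmb g),
      map (g ∘ f) (hf.comp hg) = map g hg ∘ map f hf
  map_emb : ∀ {X Y : POrd.{u}} (f : X → Y) (hf : QuasiEmb f), IsEmb f → IsEmb (map f hf)
  supp_finite : ∀ {X : POrd.{u}} (σ : obj X), (supp σ).Finite
  supp_natural : ∀ {X Y : POrd.{u}} (f : X → Y) (hf : QuasiEmb f) (σ : obj X),
      supp (map f hf σ) = f '' supp σ
  supp_cond : ∀ {X Y : POrd.{u}} (f : X → Y) (hf : QuasiEmb f), IsEmb f →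
      ∀ σ : obj Y, supp σ ⊆ Set.range f → σ ∈ Set.range (map f hf)

/-- Normality of a PO-dilator. -/
def PODilator.IsNormal (W : PODilator.{u}) : Prop :=
  ∀ (X : POrd.{u}) (σ τ : W.obj X), σ ≤ τ → LeFin (W.supp σ) (W.supp τ)

/-- Well partial orders. -/
def IsWpo (X : Type*) [PartialOrder X] : Prop :=
  ∀ f : ℕ → X, ∃ i j : ℕ, i < j ∧ f i ≤ f j

/-- A WPO-dilator preserves well partial orders. -/
def PODilator.IsWPO (W : PODilator.{u}) : Prop :=
  ∀ X : POrd.{u}, IsWpo X → IsWpo (W.obj X)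

/-- Kruskal fixed point of `W` over `X`. -/
structure IsKruskalFP (W : PODilator.{u}) (X Z : POrd.{u})
    (ι : X → Z) (κ : W.obj Z → Z) : Prop where
  range_disjoint : Set.range ι ∩ Set.range κ = ∅
  iota_le : ∀ x y : X, ι x ≤ ι y → x ≤ y
  iota_kappa : ∀ (x : X) (τ : W.obj Z), ι x ≤ κ τ ↔ ∃ z ∈ W.supp τ, ι x ≤ z
  kappa_iota : ∀ (σ : W.obj Z) (y : X), ¬ κ σ ≤ ι y
  kappa_kappa : ∀ σ τ : W.obj Z, κ σ ≤ κ τ ↔ (σ ≤ τ ∨ ∃ z ∈ W.supp τ, κ σ ≤ z)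

/-- Condition (i) of Theorem 3.5. -/
structure KFPCondI (W : PODilator.{u}) (X Z : POrd.{u})
    (ι : X → Z) (κ : W.obj Z → Z) : Prop where
  range_union : Set.range ι ∪ Set.range κ = Set.univ
  iota_mono : ∀ x y : X, x ≤ y → ι x ≤ ι y
  height : ∃ h : Z → ℕ, ∀ (s : Z) (σ : W.obj Z), s ∈ W.supp σ → h s < h (κ σ)

/-- Initial Kruskal fixed points. -/
def IsInitialKFP (W : PODilator.{u}) (X Z : POrd.{u})
    (ι : X → Z) (κ : W.obj Z → Z) : Prop :=
  IsKruskalFP W X Z ι κ ∧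
  ∀ (Z' : POrd.{u}) (ι' : X → Z') (κ' : W.obj Z' → Z'), IsKruskalFP W X Z' ι' κ' →
    ∃! f : Z → Z', ∃ hf : QuasiEmb f, f ∘ ι = ι' ∧ f ∘ κ = κ' ∘ W.map f hf

/-! The theorem only uses that `Z` admits a quasi embedding into every fixed point, so it
suffices to construct one fixed point which is a well partial order. Inside any fixed point, the
elements generated by `ι` and `κ` form a fixed point whose elements are well-founded terms, but
its order may be too weak, as `ι` need not be monotone. Strengthening the order makes `W` see
fewer elements, so the new order lives on a subset only. One calls an order on a subset coherent
if it obeys the clauses of a Kruskal fixed point with monotone `ι`, relative to itself. Applying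
these clauses once more extends any coherent order, so one that is maximal by Zorn's lemma is
closed under `ι` and `κ`. For the resulting fixed point, Nash-Williams' minimal bad sequence
argument applies: the elements that lie below a member of a minimal bad sequence and have smaller
height than it form a well partial order `T`. Hence `W T` is one too, and every member of the
sequence lies in the image of `X` or of `W T`. -/

section WellPartialOrder

theorem IsWpo.isPWO_range {α β : Type*} [PartialOrder α] [PartialOrder β] (hα : IsWpo α)
    {f : α → β} (hf : Monotone f) : (Set.range f).IsPWO := by
  rw [← Set.image_univ]
  exact (Set.isPWO_univ_iff.2 ⟨hα⟩).image_of_monotone hf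

theorem IsWpo.of_quasiEmb {α β : Type*} [PartialOrder α] [PartialOrder β] (hβ : IsWpo β)
    {f : α → β} (hf : QuasiEmb f) : IsWpo α := fun s ↦
  let ⟨i, j, hij, hle⟩ := hβ (f ∘ s)
  ⟨i, j, hij, hf _ _ hle⟩

open Set.PartiallyWellOrderedOn in
theorem exists_minBadSeq_of_not_isWpo {α : Type*} [PartialOrder α] (rk : α → ℕ)
    (hα : ¬ IsWpo α) :
    ∃ f : ℕ → α, IsBadSeq (· ≤ ·) Set.univ f ∧ ∀ n, IsMinBadSeq (· ≤ ·) rk Set.univ n f := by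
  refine exists_min_bad_of_exists_bad _ rk _ ?_
  simp only [IsWpo] at hα
  push Not at hα
  obtain ⟨f, hf⟩ := hα
  exact ⟨f, fun _ ↦ trivial, hf⟩

open Set.PartiallyWellOrderedOn in
theorem isPWO_setOf_rank_lt_minBadSeq {α : Type*} [Preorder α] {rk : α → ℕ} {f : ℕ → α}
    (hbad : IsBadSeq (· ≤ ·) Set.univ f)
    (hmin : ∀ n, IsMinBadSeq (· ≤ ·) rk Set.univ n f) :
    {a | ∃ n, a ≤ f n ∧ rk a < rk (f n)}.IsPWO := by
  refine (iff_forall_not_isBadSeq _ _).2 ?_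
  rintro t ⟨ht, ht_bad⟩
  choose N hle hlt using ht
  obtain ⟨i₀, hi₀⟩ : ∃ i₀, ∀ i, N i₀ ≤ N i := ⟨_, fun i ↦ Function.argmin_le N i⟩
  -- Replacing `f` from `N i₀` on by the tail of `t` keeps it bad: if `f m ≤ t i` with
  -- `m < N i₀`, then `f m ≤ f (N i)` and `m < N i`.
  let g : ℕ → α := fun n ↦ if n < N i₀ then f n else t (i₀ + (n - N i₀))
  have g_of_lt {n} (hn : n < N i₀) : g n = f n := if_pos hn
  have g_of_ge {n} (hn : N i₀ ≤ n) : g n = t (i₀ + (n - N i₀)) := if_neg hn.not_gt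
  refine hmin (N i₀) g (fun m hm ↦ (g_of_lt hm).symm) ?_ ⟨fun _ ↦ trivial, fun m n hmn ↦ ?_⟩
  · simpa only [g_of_ge le_rfl, Nat.sub_self, Nat.add_zero] using hlt i₀
  · rcases lt_or_ge n (N i₀) with hn | hn
    · rw [g_of_lt hn, g_of_lt (hmn.trans hn)]
      exact hbad.2 m n hmn
    rcases lt_or_ge m (N i₀) with hm | hm
    · rw [g_of_lt hm, g_of_ge hn]
      exact fun h ↦ hbad.2 m _ (hm.trans_le (hi₀ _)) (h.trans (hle _))
    · rw [g_of_ge hm, g_of_ge hn]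
      exact ht_bad _ _ (by omega)

end WellPartialOrder

theorem QuasiEmb.injective {α β : Type*} [PartialOrder α] [PartialOrder β] {f : α → β}
    (hf : QuasiEmb f) : Function.Injective f := fun _ _ h ↦
  le_antisymm (hf _ _ h.le) (hf _ _ h.ge)

theorem IsEmb.quasiEmb {α β : Type*} [PartialOrder α] [PartialOrder β] {f : α → β}
    (hf : IsEmb f) : QuasiEmb f := fun x y ↦ (hf x y).2

theorem isEmb_subtype_val {α : Type*} [PartialOrder α] (p : α → Prop) :
    IsEmb (Subtype.val : Subtype p → α) := fun _ _ ↦ Iff.rfl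

variable {W : PODilator.{u}} {X Y Z : POrd.{u}} {ι : X → Z} {κ : W.obj Z → Z}

namespace IsKruskalFP

theorem iota_injective (hZ : IsKruskalFP W X Z ι κ) : Function.Injective ι := fun _ _ h ↦
  le_antisymm (hZ.iota_le _ _ h.le) (hZ.iota_le _ _ h.ge)

theorem iota_ne_kappa (hZ : IsKruskalFP W X Z ι κ) (x : X) (σ : W.obj Z) : ι x ≠ κ σ := fun h ↦
  (Set.disjoint_iff_inter_eq_empty.2 hZ.range_disjoint).ne_of_mem ⟨x, rfl⟩ ⟨σ, rfl⟩ h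

theorem le_kappa_of_mem_supp (hZ : IsKruskalFP W X Z ι κ)
    (hrange : Set.range ι ∪ Set.range κ = Set.univ) {σ : W.obj Z} {s : Z} (hs : s ∈ W.supp σ) :
    s ≤ κ σ := by
  rcases (hrange ▸ Set.mem_univ s : s ∈ Set.range ι ∪ Set.range κ) with ⟨x, rfl⟩ | ⟨τ, rfl⟩
  · exact (hZ.iota_kappa _ _).2 ⟨_, hs, le_rfl⟩
  · exact (hZ.kappa_kappa _ _).2 (Or.inr ⟨_, hs, le_rfl⟩)

theorem comap (hZ : IsKruskalFP W X Z ι κ) {g : Y → Z} (hg : IsEmb g) {ι' : X → Y}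
    {κ' : W.obj Y → Y} (hι : ∀ x, g (ι' x) = ι x)
    (hκ : ∀ σ, g (κ' σ) = κ (W.map g hg.quasiEmb σ)) : IsKruskalFP W X Y ι' κ' where
  range_disjoint := by
    rw [← Set.disjoint_iff_inter_eq_empty, Set.disjoint_left]
    rintro _ ⟨x, rfl⟩ ⟨σ, hσ⟩
    exact hZ.iota_ne_kappa x _ (by rw [← hι, ← hκ, hσ])
  iota_le x y h := hZ.iota_le x y (by rwa [hg, hι, hι] at h)
  iota_kappa x τ := by
    simp only [hg _ _, hι, hκ, hZ.iota_kappa, W.supp_natural, Set.exists_mem_image]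
  kappa_iota σ y := by
    rw [hg, hι, hκ]
    exact hZ.kappa_iota _ _
  kappa_kappa σ τ := by
    rw [hg, hκ, hκ, hZ.kappa_kappa, W.supp_natural, ← W.map_emb g hg.quasiEmb hg]
    simp only [Set.exists_mem_image, hg _ _, hκ]

theorem isPWO_image_kappa (hZ : IsKruskalFP W X Z ι κ) (hW : W.IsWPO) {S : Set Z}
    (hS : S.IsPWO) : (κ '' {σ | W.supp σ ⊆ S}).IsPWO := by
  let T : POrd.{u} := POrd.of S
  let g : T → Z := Subtype.val
  have hg : IsEmb g := isEmb_subtype_val _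
  have hmono : Monotone (κ ∘ W.map g hg.quasiEmb) := fun σ τ h ↦
    (hZ.kappa_kappa _ _).2 (Or.inl ((W.map_emb g _ hg σ τ).1 h))
  refine ((hW T hS).isPWO_range hmono).mono ?_
  rintro _ ⟨σ, hσ, rfl⟩
  obtain ⟨τ, rfl⟩ := W.supp_cond g hg.quasiEmb hg σ (hσ.trans Subtype.range_val.ge)
  exact ⟨τ, rfl⟩

theorem isWpo_of_kfpCondI (hZ : IsKruskalFP W X Z ι κ) (hI : KFPCondI W X Z ι κ)
    (hW : W.IsWPO) (hX : IsWpo X) : IsWpo Z := by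
  obtain ⟨rk, hrk⟩ := hI.height
  by_contra hnot
  obtain ⟨f, hbad, hmin⟩ := exists_minBadSeq_of_not_isWpo rk hnot
  have hsmaller := isPWO_setOf_rank_lt_minBadSeq hbad hmin
  have hunion := (hX.isPWO_range hI.iota_mono).union (hZ.isPWO_image_kappa hW hsmaller)
  refine (Set.PartiallyWellOrderedOn.iff_forall_not_isBadSeq _ _).1 hunion f ⟨fun n ↦ ?_, hbad.2⟩
  rcases (hI.range_union ▸ Set.mem_univ (f n) : f n ∈ Set.range ι ∪ Set.range κ) with
    hx | ⟨σ, hσ⟩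
  · exact Or.inl hx
  · exact Or.inr ⟨σ, fun s hs ↦
      ⟨n, hσ ▸ hZ.le_kappa_of_mem_supp hI.range_union hs, hσ ▸ hrk s σ hs⟩, hσ⟩

end IsKruskalFP

/-- `HeightLE ι κ n z` says that `z` is a term built from `ι` and `κ` in which at most `n`
applications of `κ` are nested. -/
inductive HeightLE (ι : X → Z) (κ : W.obj Z → Z) : ℕ → Z → Prop
  | iota (n : ℕ) (x : X) : HeightLE ι κ n (ι x)
  | kappa {n : ℕ} {σ : W.obj Z} (hσ : ∀ z ∈ W.supp σ, HeightLE ι κ n z) :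
      HeightLE ι κ (n + 1) (κ σ)

namespace HeightLE

theorem mono {m n : ℕ} {z : Z} (hz : HeightLE ι κ m z) (hmn : m ≤ n) : HeightLE ι κ n z := by
  induction hz generalizing n with
  | iota m x => exact .iota n x
  | kappa _ ih =>
    obtain ⟨k, rfl⟩ := Nat.exists_eq_succ_of_ne_zero (Nat.ne_zero_of_lt hmn)
    exact .kappa fun z hz ↦ ih z hz (Nat.le_of_succ_le_succ hmn)

theorem exists_kappa {σ : W.obj Z} (hσ : ∀ z ∈ W.supp σ, ∃ n, HeightLE ι κ n z) :
    ∃ n, HeightLE ι κ n (κ σ) := by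
  choose! f hf using hσ
  obtain ⟨b, hb⟩ := ((W.supp_finite σ).image f).bddAbove
  exact ⟨b + 1, .kappa fun z hz ↦ (hf z hz).mono (hb ⟨z, hz, rfl⟩)⟩

theorem of_comp {g : Y → Z} (hg : IsEmb g) {ι' : X → Y} {κ' : W.obj Y → Y}
    (hι : ∀ x, g (ι' x) = ι x) (hκ : ∀ σ, g (κ' σ) = κ (W.map g hg.quasiEmb σ))
    (hrange : ∀ n z, HeightLE ι κ n z → z ∈ Set.range g) {n : ℕ} {z : Z}
    (hz : HeightLE ι κ n z) {y : Y} (hy : g y = z) : HeightLE ι' κ' n y := by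
  induction hz generalizing y with
  | iota n x =>
    rw [hg.quasiEmb.injective (hy.trans (hι x).symm)]
    exact .iota n x
  | @kappa n σ hσ ih =>
    obtain ⟨τ, rfl⟩ := W.supp_cond g hg.quasiEmb hg σ fun z hz ↦ hrange n z (hσ z hz)
    rw [hg.quasiEmb.injective (hy.trans (hκ τ).symm)]
    refine .kappa fun w hw ↦ ih (g w) ?_ rfl
    rw [W.supp_natural]
    exact Set.mem_image_of_mem g hw

end HeightLE

/-- A Kruskal fixed point all of whose elements are terms of finite height. -/
structure IsGeneratedKFP (W : PODilator.{u}) (X Z : POrd.{u}) (ι : X → Z) (κ : W.obj Z → Z) : Prop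
    extends IsKruskalFP W X Z ι κ where
  exists_heightLE : ∀ z, ∃ n, HeightLE ι κ n z

theorem IsKruskalFP.exists_isGeneratedKFP (hZ : IsKruskalFP W X Z ι κ) :
    ∃ (Y : POrd.{u}) (ι' : X → Y) (κ' : W.obj Y → Y), IsGeneratedKFP W X Y ι' κ' := by
  let Y : POrd.{u} := POrd.of {z : Z // ∃ n, HeightLE ι κ n z}
  let g : Y → Z := Subtype.val
  have hg : IsEmb g := isEmb_subtype_val _
  have hclosed (σ : W.obj Y) : ∃ n, HeightLE ι κ n (κ (W.map g hg.quasiEmb σ)) := by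
    refine HeightLE.exists_kappa fun z hz ↦ ?_
    rw [W.supp_natural] at hz
    obtain ⟨y, -, rfl⟩ := hz
    exact y.2
  let ι' : X → Y := fun x ↦ ⟨ι x, 0, .iota 0 x⟩
  let κ' : W.obj Y → Y := fun σ ↦ ⟨κ (W.map g hg.quasiEmb σ), hclosed σ⟩
  refine ⟨Y, ι', κ', hZ.comap hg (fun _ ↦ rfl) fun _ ↦ rfl, fun y ↦ y.2.imp fun _ hn ↦ ?_⟩
  exact hn.of_comp hg (fun _ ↦ rfl) (fun _ ↦ rfl) (fun m z hz ↦ ⟨⟨z, m, hz⟩, rfl⟩) rfl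

namespace IsGeneratedKFP

@[elab_as_elim]
theorem induction (hZ : IsGeneratedKFP W X Z ι κ) {p : Z → Prop} (iota : ∀ x, p (ι x))
    (kappa : ∀ σ, (∀ z ∈ W.supp σ, p z) → p (κ σ)) (z : Z) : p z := by
  obtain ⟨n, hz⟩ := hZ.exists_heightLE z
  induction hz with
  | iota _ x => exact iota x
  | kappa _ ih => exact kappa _ ih

theorem not_kappa_le_of_mem_supp (hn : W.IsNormal) (hZ : IsGeneratedKFP W X Z ι κ) {z : Z}
    {τ : W.obj Z} (hz : z ∈ W.supp τ) : ¬ κ τ ≤ z := by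
  induction z using hZ.induction generalizing τ with
  | iota x => exact hZ.kappa_iota _ _
  | kappa σ ih =>
    intro hle
    rcases (hZ.kappa_kappa _ _).1 hle with hτσ | ⟨w, hw, hτw⟩
    · obtain ⟨w, hw, hσw⟩ := hn _ _ _ hτσ _ hz
      exact ih w hw hw hσw
    · have hστ : κ σ ≤ κ τ := (hZ.kappa_kappa _ _).2 (Or.inr ⟨_, hz, le_rfl⟩)
      exact ih w hw hw (hστ.trans hτw)

theorem kappa_injective (hn : W.IsNormal) (hZ : IsGeneratedKFP W X Z ι κ) :
    Function.Injective κ := by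
  have le_of_eq {σ τ : W.obj Z} (h : κ σ = κ τ) : σ ≤ τ :=
    ((hZ.kappa_kappa _ _).1 h.le).resolve_right fun ⟨_, hw, hle⟩ ↦
      hZ.not_kappa_le_of_mem_supp hn hw (h ▸ hle)
  exact fun σ τ h ↦ le_antisymm (le_of_eq h) (le_of_eq h.symm)

theorem heightLE_of_mem_supp (hn : W.IsNormal) (hZ : IsGeneratedKFP W X Z ι κ) {n : ℕ}
    {σ : W.obj Z} (hσ : HeightLE ι κ n (κ σ)) {z : Z} (hz : z ∈ W.supp σ) :
    ∃ m < n, HeightLE ι κ m z := by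
  generalize hw : κ σ = w at hσ
  cases hσ with
  | iota _ x => exact absurd hw.symm (hZ.iota_ne_kappa _ _)
  | kappa hσ =>
    cases hZ.kappa_injective hn hw
    exact ⟨_, Nat.lt_succ_self _, hσ z hz⟩

theorem exists_height (hn : W.IsNormal) (hZ : IsGeneratedKFP W X Z ι κ) :
    ∃ h : Z → ℕ, ∀ (s : Z) (σ : W.obj Z), s ∈ W.supp σ → h s < h (κ σ) := by
  classical
  refine ⟨fun z ↦ Nat.find (hZ.exists_heightLE z), fun s σ hs ↦ ?_⟩
  obtain ⟨m, hm, hs⟩ := hZ.heightLE_of_mem_supp hn (Nat.find_spec (hZ.exists_heightLE (κ σ))) hs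
  exact (Nat.find_min' _ hs).trans_lt hm

end IsGeneratedKFP

/-- `r` is the restriction of `s` to the domain `{x | r x x}` of `r`. -/
def IsRestriction {α : Type*} (r s : α → α → Prop) : Prop :=
  ∀ x y, r x y ↔ r x x ∧ r y y ∧ s x y

theorem IsRestriction.mono {α : Type*} {r s : α → α → Prop} (h : IsRestriction r s) {x y : α}
    (hxy : r x y) : s x y := ((h x y).1 hxy).2.2

/-- A suborder of `Z` is a partial order on a subset of `Z` such that the inclusion into `Z` is a
quasi embedding. It is encoded by a relation on all of `Z`, its underlying set being
`{z | rel z z}`. -/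
structure Suborder (Z : Type*) [PartialOrder Z] where
  rel : Z → Z → Prop
  refl_left : ∀ {x y}, rel x y → rel x x
  refl_right : ∀ {x y}, rel x y → rel y y
  trans : ∀ {x y z}, rel x y → rel y z → rel x z
  antisymm : ∀ {x y}, rel x y → rel y x → x = y
  rel_of_le : ∀ {x y}, rel x x → rel y y → x ≤ y → rel x y

namespace Suborder

/-- Suborders are ordered by embeddings: the smaller one carries the order induced by the larger
one. -/
instance {α : Type*} [PartialOrder α] : Preorder (Suborder α) where
  le P Q := IsRestriction P.rel Q.rel
  le_refl P _ _ := ⟨fun h ↦ ⟨P.refl_left h, P.refl_right h, h⟩, fun h ↦ h.2.2⟩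
  le_trans P Q R hPQ hQR x y :=
    ⟨fun h ↦ ⟨P.refl_left h, P.refl_right h, hQR.mono (hPQ.mono h)⟩, fun ⟨hx, hy, h⟩ ↦
      (hPQ x y).2 ⟨hx, hy, (hQR x y).2 ⟨hPQ.mono hx, hPQ.mono hy, h⟩⟩⟩

theorem le_def {α : Type*} [PartialOrder α] {P Q : Suborder α} :
    P ≤ Q ↔ IsRestriction P.rel Q.rel := Iff.rfl

theorem rel_mono {α : Type*} [PartialOrder α] {P Q : Suborder α} (h : P ≤ Q) {x y : α}
    (hxy : P.rel x y) : Q.rel x y := h.mono hxy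

/-- The union of a directed family of suborders. -/
def sUnion {α : Type*} [PartialOrder α] (c : Set (Suborder α)) (hc : DirectedOn (· ≤ ·) c) :
    Suborder α where
  rel x y := ∃ P ∈ c, P.rel x y
  refl_left := fun ⟨P, hP, h⟩ ↦ ⟨P, hP, P.refl_left h⟩
  refl_right := fun ⟨P, hP, h⟩ ↦ ⟨P, hP, P.refl_right h⟩
  trans := fun ⟨P, hP, hxy⟩ ⟨Q, hQ, hyz⟩ ↦
    let ⟨R, hR, hPR, hQR⟩ := hc P hP Q hQ
    ⟨R, hR, R.trans (rel_mono hPR hxy) (rel_mono hQR hyz)⟩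
  antisymm := fun ⟨P, hP, hxy⟩ ⟨Q, hQ, hyx⟩ ↦
    let ⟨R, _, hPR, hQR⟩ := hc P hP Q hQ
    R.antisymm (rel_mono hPR hxy) (rel_mono hQR hyx)
  rel_of_le := fun ⟨P, hP, hx⟩ ⟨Q, hQ, hy⟩ hxy ↦
    let ⟨R, hR, hPR, hQR⟩ := hc P hP Q hQ
    ⟨R, hR, R.rel_of_le (rel_mono hPR hx) (rel_mono hQR hy) hxy⟩

theorem le_sUnion {α : Type*} [PartialOrder α] {c : Set (Suborder α)}
    (hc : DirectedOn (· ≤ ·) c) {P : Suborder α} (hP : P ∈ c) : P ≤ sUnion c hc := by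
  refine le_def.2 fun x y ↦ ⟨fun h ↦ ⟨P.refl_left h, P.refl_right h, P, hP, h⟩, ?_⟩
  rintro ⟨hx, hy, Q, hQ, h⟩
  obtain ⟨R, -, hPR, hQR⟩ := hc P hP Q hQ
  exact (le_def.1 hPR x y).2 ⟨hx, hy, rel_mono hQR h⟩

/-- The order on the range of a quasi embedding that makes it an isomorphism onto its range. -/
def ofQuasiEmb {α β : Type*} [PartialOrder α] [PartialOrder β] (f : α → β) (hf : QuasiEmb f) :
    Suborder β where
  rel := Relation.Map (· ≤ ·) f f
  refl_left := fun ⟨x, _, _, hx, _⟩ ↦ ⟨x, x, le_rfl, hx, hx⟩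
  refl_right := fun ⟨_, y, _, _, hy⟩ ↦ ⟨y, y, le_rfl, hy, hy⟩
  trans := by
    rintro _ _ _ ⟨x, y, hxy, rfl, rfl⟩ ⟨y', z, hyz, hy, rfl⟩
    cases hf.injective hy
    exact ⟨x, z, hxy.trans hyz, rfl, rfl⟩
  antisymm := by
    rintro _ _ ⟨x, y, hxy, rfl, rfl⟩ ⟨y', x', hyx, hy, hx⟩
    cases hf.injective hy
    cases hf.injective hx
    rw [le_antisymm hxy hyx]
  rel_of_le := by
    rintro _ _ ⟨x, _, _, rfl, -⟩ ⟨y, _, _, rfl, -⟩ hxy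
    exact ⟨x, y, hf x y hxy, rfl, rfl⟩

theorem ofQuasiEmb_rel_iff {α β : Type*} [PartialOrder α] [PartialOrder β] {f : α → β}
    (hf : QuasiEmb f) {x y : α} : (ofQuasiEmb f hf).rel (f x) (f y) ↔ x ≤ y := by
  refine ⟨?_, fun h ↦ ⟨x, y, h, rfl, rfl⟩⟩
  rintro ⟨x', y', h, hx, hy⟩
  rwa [hf.injective hx, hf.injective hy] at h

/-- The partial order given by a suborder. -/
def toPOrd (P : Suborder Z) : POrd.{u} where
  carrier := {z : Z // P.rel z z}
  str :=
    { le := fun x y ↦ P.rel x.1 y.1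
      lt := fun x y ↦ P.rel x.1 y.1 ∧ ¬ P.rel y.1 x.1
      lt_iff_le_not_ge := fun _ _ ↦ Iff.rfl
      le_refl := fun x ↦ x.2
      le_trans := fun _ _ _ ↦ P.trans
      le_antisymm := fun _ _ hxy hyx ↦ Subtype.ext (P.antisymm hxy hyx) }

/-- The inclusion of a suborder. -/
def val (P : Suborder Z) : P.toPOrd → Z := Subtype.val

variable {P Q : Suborder Z} {σ τ : W.obj Z}

theorem le_iff_rel {x y : P.toPOrd} : x ≤ y ↔ P.rel (P.val x) (P.val y) := Iff.rfl

theorem quasiEmb_val (P : Suborder Z) : QuasiEmb P.val := fun x y ↦ P.rel_of_le x.2 y.2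

theorem exists_isEmb_of_le (h : P ≤ Q) :
    ∃ i : P.toPOrd → Q.toPOrd, IsEmb i ∧ Q.val ∘ i = P.val :=
  ⟨fun x ↦ ⟨x.1, rel_mono h x.2⟩,
    fun x y ↦ ⟨fun hxy ↦ rel_mono h hxy, fun hxy ↦ (le_def.1 h _ _).2 ⟨x.2, y.2, hxy⟩⟩, rfl⟩

/-- The order of `W P`, viewed as a suborder of `W Z` along the inclusion of `P` into `Z`. -/
def lift (W : PODilator.{u}) (P : Suborder Z) : Suborder (W.obj Z) :=
  ofQuasiEmb (W.map P.val P.quasiEmb_val) (W.map_quasiEmb _ _)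

theorem lift_rel_map_iff {σ τ : W.obj P.toPOrd} :
    (P.lift W).rel (W.map P.val P.quasiEmb_val σ) (W.map P.val P.quasiEmb_val τ) ↔ σ ≤ τ :=
  ofQuasiEmb_rel_iff _

theorem lift_mono (h : P ≤ Q) : P.lift W ≤ Q.lift W := by
  obtain ⟨i, hi, hval⟩ := exists_isEmb_of_le h
  have hmap (σ : W.obj P.toPOrd) : W.map P.val P.quasiEmb_val σ =
      W.map Q.val Q.quasiEmb_val (W.map i hi.quasiEmb σ) := by
    simp only [← hval]
    exact congrFun (W.map_comp i Q.val hi.quasiEmb Q.quasiEmb_val) σ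
  have hrel (σ τ : W.obj P.toPOrd) :
      (Q.lift W).rel (W.map P.val P.quasiEmb_val σ) (W.map P.val P.quasiEmb_val τ) ↔ σ ≤ τ := by
    rw [hmap, hmap, lift_rel_map_iff, ← W.map_emb i hi.quasiEmb hi]
  refine le_def.2 fun σ τ ↦ ⟨fun hστ ↦
    ⟨(P.lift W).refl_left hστ, (P.lift W).refl_right hστ, ?_⟩, ?_⟩
  · obtain ⟨σ, τ, hle, rfl, rfl⟩ := hστ
    exact (hrel σ τ).2 hle
  · rintro ⟨⟨σ, -, -, rfl, -⟩, ⟨τ, -, -, rfl, -⟩, hστ⟩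
    exact lift_rel_map_iff.2 ((hrel σ τ).1 hστ)

theorem rel_self_of_mem_supp (hσ : (P.lift W).rel σ σ) {z : Z} (hz : z ∈ W.supp σ) :
    P.rel z z := by
  obtain ⟨σ, -, -, rfl, -⟩ := hσ
  rw [W.supp_natural] at hz
  obtain ⟨y, -, rfl⟩ := hz
  exact y.2

theorem exists_supp_rel (hn : W.IsNormal) (h : (P.lift W).rel σ τ) {z : Z}
    (hz : z ∈ W.supp σ) : ∃ w ∈ W.supp τ, P.rel z w := by
  obtain ⟨σ, τ, hle, rfl, rfl⟩ := h
  simp only [W.supp_natural] at hz ⊢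
  obtain ⟨y, hy, rfl⟩ := hz
  obtain ⟨w, hw, hyw⟩ := hn _ _ _ hle y hy
  exact ⟨P.val w, Set.mem_image_of_mem _ hw, hyw⟩

end Suborder

open Suborder

/-- The relation on terms over `P` that is given by the clauses of a Kruskal fixed point with
monotone `ι`, where the arguments of `κ` are elements of `W P` and compared as such. -/
inductive KruskalRel (ι : X → Z) (κ : W.obj Z → Z) (P : Suborder Z) : Z → Z → Prop
  | iota {x y : X} (h : x ≤ y) : KruskalRel ι κ P (ι x) (ι y)
  | kappa {σ τ : W.obj Z} (h : (P.lift W).rel σ τ) : KruskalRel ι κ P (κ σ) (κ τ)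
  | supp {s z : Z} {τ : W.obj Z} (hτ : (P.lift W).rel τ τ) (hz : z ∈ W.supp τ)
      (h : KruskalRel ι κ P s z) : KruskalRel ι κ P s (κ τ)

/-- A suborder is coherent if its order is a restriction of the relation `KruskalRel` that it
determines. In particular, its elements are terms over the suborder itself. -/
def Suborder.IsCoherent (ι : X → Z) (κ : W.obj Z → Z) (P : Suborder Z) : Prop :=
  IsRestriction P.rel (KruskalRel ι κ P)

namespace KruskalRel

variable {P Q : Suborder Z} {s t u z : Z} {τ : W.obj Z}

theorem refl_left (h : KruskalRel ι κ P s t) : KruskalRel ι κ P s s := by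
  induction h with
  | iota _ => exact .iota le_rfl
  | kappa h => exact .kappa ((P.lift W).refl_left h)
  | supp _ _ _ ih => exact ih

theorem refl_right (h : KruskalRel ι κ P s t) : KruskalRel ι κ P t t := by
  cases h with
  | iota _ => exact .iota le_rfl
  | kappa h => exact .kappa ((P.lift W).refl_right h)
  | supp hτ _ _ => exact .kappa hτ

theorem exists_of_iota_right (hZ : IsKruskalFP W X Z ι κ) {y : X}
    (h : KruskalRel ι κ P s (ι y)) : ∃ x ≤ y, s = ι x := by
  generalize ht : ι y = t at h
  cases h with
  | iota h =>
    cases hZ.iota_injective ht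
    exact ⟨_, h, rfl⟩
  | kappa _ | supp _ _ _ => exact absurd ht (hZ.iota_ne_kappa _ _)

theorem exists_of_kappa_right (hn : W.IsNormal) (hZ : IsGeneratedKFP W X Z ι κ)
    (h : KruskalRel ι κ P s (κ τ)) :
    (∃ σ, s = κ σ ∧ (P.lift W).rel σ τ) ∨ ∃ z ∈ W.supp τ, KruskalRel ι κ P s z := by
  generalize ht : κ τ = t at h
  cases h with
  | iota _ => exact absurd ht.symm (hZ.iota_ne_kappa _ _)
  | kappa h =>
    cases hZ.kappa_injective hn ht
    exact Or.inl ⟨_, rfl, h⟩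
  | supp _ hz h =>
    cases hZ.kappa_injective hn ht
    exact Or.inr ⟨_, hz, h⟩

theorem lift_rel_self (hn : W.IsNormal) (hZ : IsGeneratedKFP W X Z ι κ)
    (h : KruskalRel ι κ P s (κ τ)) : (P.lift W).rel τ τ := by
  generalize ht : κ τ = t at h
  cases h with
  | iota _ => exact absurd ht.symm (hZ.iota_ne_kappa _ _)
  | kappa h => exact hZ.kappa_injective hn ht ▸ (P.lift W).refl_right h
  | supp hτ _ _ => exact hZ.kappa_injective hn ht ▸ hτ

theorem trans (hn : W.IsNormal) (hZ : IsGeneratedKFP W X Z ι κ) (hP : P.IsCoherent ι κ)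
    (hst : KruskalRel ι κ P s t) (htu : KruskalRel ι κ P t u) : KruskalRel ι κ P s u := by
  induction u using hZ.induction generalizing s t with
  | iota x =>
    obtain ⟨y, hy, rfl⟩ := htu.exists_of_iota_right hZ.toIsKruskalFP
    obtain ⟨w, hw, rfl⟩ := hst.exists_of_iota_right hZ.toIsKruskalFP
    exact .iota (hw.trans hy)
  | kappa τ ih =>
    have hτ := htu.lift_rel_self hn hZ
    rcases htu.exists_of_kappa_right hn hZ with ⟨σ, rfl, hστ⟩ | ⟨z, hz, htz⟩
    · rcases hst.exists_of_kappa_right hn hZ with ⟨ρ, rfl, hρσ⟩ | ⟨z, hz, hsz⟩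
      · exact .kappa ((P.lift W).trans hρσ hστ)
      · obtain ⟨w, hw, hzw⟩ := exists_supp_rel hn hστ hz
        exact .supp hτ hw (ih w hw hsz (hP.mono hzw))
    · exact .supp hτ hz (ih z hz hst htz)

theorem not_kappa_of_mem_supp (hn : W.IsNormal) (hZ : IsGeneratedKFP W X Z ι κ)
    (hP : P.IsCoherent ι κ) (hz : z ∈ W.supp τ) : ¬ KruskalRel ι κ P (κ τ) z := by
  induction z using hZ.induction generalizing τ with
  | iota x =>
    intro h
    obtain ⟨y, -, hy⟩ := h.exists_of_iota_right hZ.toIsKruskalFP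
    exact hZ.iota_ne_kappa _ _ hy.symm
  | kappa σ ih =>
    intro h
    rcases h.exists_of_kappa_right hn hZ with ⟨τ', hτ', hτσ⟩ | ⟨w, hw, hτw⟩
    · cases hZ.kappa_injective hn hτ'
      obtain ⟨w, hw, hσw⟩ := exists_supp_rel hn hτσ hz
      exact ih w hw hw (hP.mono hσw)
    · have hστ : KruskalRel ι κ P (κ σ) (κ τ) :=
        .supp (h.refl_left.lift_rel_self hn hZ) hz h.refl_right
      exact ih w hw hw (hστ.trans hn hZ hP hτw)

theorem antisymm (hn : W.IsNormal) (hZ : IsGeneratedKFP W X Z ι κ) (hP : P.IsCoherent ι κ)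
    (hst : KruskalRel ι κ P s t) (hts : KruskalRel ι κ P t s) : s = t := by
  induction t using hZ.induction with
  | iota y =>
    obtain ⟨x, hxy, rfl⟩ := hst.exists_of_iota_right hZ.toIsKruskalFP
    obtain ⟨y', hyx, hy'⟩ := hts.exists_of_iota_right hZ.toIsKruskalFP
    cases hZ.iota_injective hy'
    rw [le_antisymm hxy hyx]
  | kappa τ _ =>
    rcases hst.exists_of_kappa_right hn hZ with ⟨σ, rfl, hστ⟩ | ⟨w, hw, hsw⟩
    · rcases hts.exists_of_kappa_right hn hZ with ⟨τ', hτ', hτσ⟩ | ⟨w, hw, htw⟩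
      · cases hZ.kappa_injective hn hτ'
        rw [(P.lift W).antisymm hστ hτσ]
      · exact absurd (hst.trans hn hZ hP htw) (not_kappa_of_mem_supp hn hZ hP hw)
    · exact absurd (hts.trans hn hZ hP hsw) (not_kappa_of_mem_supp hn hZ hP hw)

theorem of_le (hn : W.IsNormal) (hZ : IsGeneratedKFP W X Z ι κ) (hP : P.IsCoherent ι κ)
    (hs : KruskalRel ι κ P s s) (ht : KruskalRel ι κ P t t) (hst : s ≤ t) :
    KruskalRel ι κ P s t := by
  induction t using hZ.induction with
  | iota y =>
    induction s using hZ.induction with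
    | iota x => exact .iota (hZ.iota_le _ _ hst)
    | kappa σ _ => exact absurd hst (hZ.kappa_iota _ _)
  | kappa τ ih =>
    have hτ := ht.lift_rel_self hn hZ
    have of_le_supp : (∃ w ∈ W.supp τ, s ≤ w) → KruskalRel ι κ P s (κ τ) := fun ⟨w, hw, hsw⟩ ↦
      .supp hτ hw (ih w hw (hP.mono (rel_self_of_mem_supp hτ hw)) hsw)
    induction s using hZ.induction with
    | iota x => exact of_le_supp ((hZ.iota_kappa _ _).1 hst)
    | kappa σ _ =>
      rcases (hZ.kappa_kappa _ _).1 hst with hστ | hsupp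
      · exact .kappa ((P.lift W).rel_of_le (hs.lift_rel_self hn hZ) hτ hστ)
      · exact of_le_supp hsupp

theorem isRestriction_of_le (hn : W.IsNormal) (hZ : IsGeneratedKFP W X Z ι κ)
    (hP : P.IsCoherent ι κ) (hPQ : P ≤ Q) :
    IsRestriction (KruskalRel ι κ P) (KruskalRel ι κ Q) := by
  refine fun s t ↦ ⟨fun h ↦ ⟨h.refl_left, h.refl_right, ?_⟩, ?_⟩
  · induction h with
    | iota h => exact .iota h
    | kappa h => exact .kappa (rel_mono (lift_mono hPQ) h)
    | supp hτ hz _ ih => exact .supp (rel_mono (lift_mono hPQ) hτ) hz ih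
  · rintro ⟨hs, ht, h⟩
    induction t using hZ.induction with
    | iota y =>
      obtain ⟨x, hxy, rfl⟩ := h.exists_of_iota_right hZ.toIsKruskalFP
      exact .iota hxy
    | kappa τ ih =>
      have hτ := ht.lift_rel_self hn hZ
      rcases h.exists_of_kappa_right hn hZ with ⟨σ, rfl, hστ⟩ | ⟨w, hw, hsw⟩
      · exact .kappa ((le_def.1 (lift_mono hPQ) σ τ).2 ⟨hs.lift_rel_self hn hZ, hτ, hστ⟩)
      · exact .supp hτ hw (ih w hw (hP.mono (rel_self_of_mem_supp hτ hw)) hsw)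

end KruskalRel

namespace Suborder

variable {P : Suborder Z}

/-- `KruskalRel` turns a coherent suborder into a larger one. -/
def next (hn : W.IsNormal) (hZ : IsGeneratedKFP W X Z ι κ) (P : Suborder Z)
    (hP : P.IsCoherent ι κ) : Suborder Z where
  rel := KruskalRel ι κ P
  refl_left := .refl_left
  refl_right := .refl_right
  trans := .trans hn hZ hP
  antisymm := KruskalRel.antisymm hn hZ hP
  rel_of_le := .of_le hn hZ hP

theorem le_next (hn : W.IsNormal) (hZ : IsGeneratedKFP W X Z ι κ) (hP : P.IsCoherent ι κ) :
    P ≤ next hn hZ P hP := hP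

theorem isCoherent_next (hn : W.IsNormal) (hZ : IsGeneratedKFP W X Z ι κ)
    (hP : P.IsCoherent ι κ) : (next hn hZ P hP).IsCoherent ι κ :=
  KruskalRel.isRestriction_of_le hn hZ hP (le_next hn hZ hP)

theorem isCoherent_sUnion (hn : W.IsNormal) (hZ : IsGeneratedKFP W X Z ι κ)
    {c : Set (Suborder Z)} (hc : DirectedOn (· ≤ ·) c) (hcoh : ∀ P ∈ c, P.IsCoherent ι κ) :
    (sUnion c hc).IsCoherent ι κ := by
  have hrestrict (P) (hP : P ∈ c) := KruskalRel.isRestriction_of_le hn hZ (hcoh P hP)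
    (le_sUnion hc hP)
  refine fun x y ↦ ⟨fun h ↦ ⟨(sUnion c hc).refl_left h, (sUnion c hc).refl_right h, ?_⟩, ?_⟩
  · obtain ⟨P, hP, hxy⟩ := h
    exact (hrestrict P hP).mono ((hcoh P hP).mono hxy)
  · rintro ⟨⟨P, hP, hx⟩, ⟨Q, hQ, hy⟩, hxy⟩
    obtain ⟨R, hR, hPR, hQR⟩ := hc P hP Q hQ
    replace hx := rel_mono hPR hx
    replace hy := rel_mono hQR hy
    exact ⟨R, hR, (hcoh R hR x y).2
      ⟨hx, hy, (hrestrict R hR x y).2 ⟨(hcoh R hR).mono hx, (hcoh R hR).mono hy, hxy⟩⟩⟩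

theorem exists_rel_iff_kruskalRel (hn : W.IsNormal) (hZ : IsGeneratedKFP W X Z ι κ) :
    ∃ P : Suborder Z, ∀ x y, P.rel x y ↔ KruskalRel ι κ P x y := by
  obtain ⟨P, hP, hmax⟩ := zorn_le₀ {P : Suborder Z | P.IsCoherent ι κ} fun c hcoh hc ↦
    ⟨sUnion c hc.directedOn, isCoherent_sUnion hn hZ _ hcoh, fun _ ↦ le_sUnion _⟩
  have hnext : next hn hZ P hP ≤ P := hmax (isCoherent_next hn hZ hP) (le_next hn hZ hP)
  exact ⟨P, fun x y ↦ ⟨fun h ↦ hP.mono h, fun h ↦ rel_mono hnext h⟩⟩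

section FixedPoint

variable {ι' : X → P.toPOrd} {κ' : W.obj P.toPOrd → P.toPOrd}

theorem isKruskalFP_toPOrd (hn : W.IsNormal) (hZ : IsGeneratedKFP W X Z ι κ)
    (hP : ∀ x y, P.rel x y ↔ KruskalRel ι κ P x y) (hι : ∀ x, P.val (ι' x) = ι x)
    (hκ : ∀ σ, P.val (κ' σ) = κ (W.map P.val P.quasiEmb_val σ)) :
    IsKruskalFP W X P.toPOrd ι' κ' := by
  have hsupp (a : P.toPOrd) (τ : W.obj P.toPOrd) :
      (∃ z ∈ W.supp (W.map P.val P.quasiEmb_val τ), KruskalRel ι κ P (P.val a) z) ↔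
        ∃ b ∈ W.supp τ, a ≤ b := by
    simp only [W.supp_natural, Set.exists_mem_image, le_iff_rel, hP]
  have of_supp (a : P.toPOrd) (τ : W.obj P.toPOrd) (h : ∃ b ∈ W.supp τ, a ≤ b) : a ≤ κ' τ := by
    obtain ⟨z, hz, haz⟩ := (hsupp a τ).2 h
    rw [le_iff_rel, hP, hκ]
    exact .supp (lift_rel_map_iff.2 le_rfl) hz haz
  have kappa_right {a : P.toPOrd} {τ : W.obj P.toPOrd} (h : a ≤ κ' τ) :
      (∃ σ, P.val a = κ σ ∧ (P.lift W).rel σ (W.map P.val P.quasiEmb_val τ)) ∨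
        ∃ b ∈ W.supp τ, a ≤ b := by
    rw [le_iff_rel, hP, hκ] at h
    rw [← hsupp]
    exact h.exists_of_kappa_right hn hZ
  have iota_right {a : P.toPOrd} {y : X} (h : a ≤ ι' y) : ∃ x ≤ y, P.val a = ι x := by
    rw [le_iff_rel, hP, hι] at h
    exact h.exists_of_iota_right hZ.toIsKruskalFP
  refine ⟨?_, fun x y h ↦ ?_, fun x τ ↦ ⟨fun h ↦ ?_, of_supp _ τ⟩, fun σ y h ↦ ?_,
    fun σ τ ↦ ⟨fun h ↦ ?_, fun h ↦ h.elim (fun h ↦ ?_) (of_supp _ τ)⟩⟩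
  · rw [← Set.disjoint_iff_inter_eq_empty, Set.disjoint_left]
    rintro _ ⟨x, rfl⟩ ⟨σ, hσ⟩
    exact hZ.iota_ne_kappa x _ (by rw [← hι, ← hκ, hσ])
  · obtain ⟨x', hx', hx⟩ := iota_right h
    rwa [hZ.iota_injective ((hι x).symm.trans hx)]
  · refine (kappa_right h).resolve_left fun ⟨σ, hσ, _⟩ ↦ ?_
    exact hZ.iota_ne_kappa x σ ((hι x).symm.trans hσ)
  · obtain ⟨x, -, hx⟩ := iota_right h
    exact hZ.iota_ne_kappa x _ (hx.symm.trans (hκ σ))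
  · refine (kappa_right h).imp_left fun ⟨σ', hσ', h⟩ ↦ lift_rel_map_iff.1 ?_
    rwa [hZ.kappa_injective hn ((hκ σ).symm.trans hσ')]
  · rw [le_iff_rel, hP, hκ, hκ]
    exact .kappa (lift_rel_map_iff.2 h)

theorem kfpCondI_toPOrd (hn : W.IsNormal) (hZ : IsGeneratedKFP W X Z ι κ)
    (hP : ∀ x y, P.rel x y ↔ KruskalRel ι κ P x y) (hι : ∀ x, P.val (ι' x) = ι x)
    (hκ : ∀ σ, P.val (κ' σ) = κ (W.map P.val P.quasiEmb_val σ)) :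
    KFPCondI W X P.toPOrd ι' κ' where
  range_union := by
    refine Set.eq_univ_of_forall fun a ↦ ?_
    have ha : KruskalRel ι κ P (P.val a) (P.val a) := (hP _ _).1 a.2
    obtain ⟨z, hz⟩ : ∃ z, P.val a = z := ⟨_, rfl⟩
    rw [hz] at ha
    induction z using hZ.induction with
    | iota x => exact Or.inl ⟨x, P.quasiEmb_val.injective ((hι x).trans hz.symm)⟩
    | kappa σ _ =>
      obtain ⟨σ, -, -, rfl, -⟩ := ha.lift_rel_self hn hZ
      exact Or.inr ⟨σ, P.quasiEmb_val.injective ((hκ σ).trans hz.symm)⟩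
  iota_mono x y h := by
    rw [le_iff_rel, hP, hι, hι]
    exact .iota h
  height := by
    obtain ⟨h, hh⟩ := hZ.exists_height hn
    refine ⟨h ∘ P.val, fun s σ hs ↦ ?_⟩
    rw [Function.comp_apply, Function.comp_apply, hκ]
    exact hh _ _ (W.supp_natural P.val _ σ ▸ Set.mem_image_of_mem _ hs)

end FixedPoint

end Suborder

theorem IsGeneratedKFP.exists_kfpCondI (hn : W.IsNormal) (hZ : IsGeneratedKFP W X Z ι κ) :
    ∃ (Y : POrd.{u}) (ι' : X → Y) (κ' : W.obj Y → Y),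
      IsKruskalFP W X Y ι' κ' ∧ KFPCondI W X Y ι' κ' := by
  obtain ⟨P, hP⟩ := exists_rel_iff_kruskalRel hn hZ
  let ι' : X → P.toPOrd := fun x ↦ ⟨ι x, (hP _ _).2 (.iota le_rfl)⟩
  let κ' : W.obj P.toPOrd → P.toPOrd := fun σ ↦
    ⟨κ (W.map P.val P.quasiEmb_val σ), (hP _ _).2 (.kappa (lift_rel_map_iff.2 le_rfl))⟩
  exact ⟨P.toPOrd, ι', κ', isKruskalFP_toPOrd hn hZ hP (fun _ ↦ rfl) fun _ ↦ rfl,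
    kfpCondI_toPOrd hn hZ hP (fun _ ↦ rfl) fun _ ↦ rfl⟩

theorem IsKruskalFP.exists_isKruskalFP_isWpo (hn : W.IsNormal) (hW : W.IsWPO) (hX : IsWpo X)
    (hZ : IsKruskalFP W X Z ι κ) :
    ∃ (Y : POrd.{u}) (ι' : X → Y) (κ' : W.obj Y → Y), IsKruskalFP W X Y ι' κ' ∧ IsWpo Y := by
  obtain ⟨_, _, _, hgen⟩ := hZ.exists_isGeneratedKFP
  obtain ⟨Y, ι', κ', hY, hI⟩ := hgen.exists_kfpCondI hn
  exact ⟨Y, ι', κ', hY, hY.isWpo_of_kfpCondI hI hW hX⟩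

theorem initial_kruskalFP_isWpo_general (hn : W.IsNormal) (hW : W.IsWPO) (hX : IsWpo X)
    (hZ : IsKruskalFP W X Z ι κ)
    (hweak : ∀ (Y : POrd.{u}) (ι' : X → Y) (κ' : W.obj Y → Y), IsKruskalFP W X Y ι' κ' →
      ∃ f : Z → Y, QuasiEmb f) : IsWpo Z := by
  obtain ⟨Y, ι', κ', hY, hYwpo⟩ := hZ.exists_isKruskalFP_isWpo hn hW hX
  obtain ⟨f, hf⟩ := hweak Y ι' κ' hY
  exact hYwpo.of_quasiEmb hf

/-- If `W` is a normal WPO-dilator and `X` is a wpo, then any initial Kruskal fixed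
point of `W` over `X` is a well partial order. -/
theorem initial_kruskalFP_isWpo (W : PODilator.{u}) (hWnormal : W.IsNormal)
    (hWwpo : W.IsWPO) (X : POrd.{u}) (hX : IsWpo X)
    (Z : POrd.{u}) (ι : X → Z) (κ : W.obj Z → Z)
    (h : IsInitialKFP W X Z ι κ) : IsWpo Z :=
  initial_kruskalFP_isWpo_general hWnormal hWwpo hX h.1 fun Y ι' κ' hY ↦
    let ⟨f, ⟨hf, _⟩, _⟩ := h.2 Y ι' κ' hY
    ⟨f, hf⟩
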